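/- For every (f,T) ∈ 𝓒^1 × 𝓔^1, the set of invariant Borel probability measures of the restriction T|K(f,T) is exactly the set 𝓜_max(f,T) = {μ : μ is a T-invariant Borel probability measure with ∫ f dμ = β(f,T)} of maximizing measures of (f,T). -/

import Mathlib

/-!
On `Λ_{f,T,g}` the Birkhoff sums of `f` telescope to `n β + g ∘ T^n - g`, so the Birkhoff averages
converge to `β` on `K(f,T)`, and dominated convergence shows that an invariant measure carried by
`K(f,T)` is maximizing.

Conversely, let `g` be a Lipschitz calibrated sub-action. The nonnegative function
`g ∘ T + β - g - f` has integral zero against a maximizing measure, which is therefore carried by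
`E_{f,T,g}`; by invariance it is carried by `Λ*_{f,T,g}` and all its forward images, hence by
`Λ_{f,T,g} ⊆ K(f,T)`.

Such a `g` exists because inverse branches of an expanding map contract geometrically: an orbit
segment can be followed backwards from any other end point at a bounded cost `D * diam`. If a
Birkhoff sum of length `n` exceeded `n β + D * diam`, concatenating backward copies of its segment
would produce, by weak compactness of the empirical measures, an invariant measure with integral
larger than `β`. So the Birkhoff sums of `f - β` are bounded above, while some of them are
nonnegative for every length; the limsup over `n` of their suprema over the fibres `T^n y = x` is
then a finite Lipschitz function of `x`, and it is calibrated.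
-/

open MeasureTheory Topology Filter Set
open scoped UniformConvergence

noncomputable section

/-- The circle `ℝ/ℤ`. -/
abbrev Circle1 : Type := AddCircle (1 : ℝ)

/-- The canonical representative in `[0,1)` of a point of `ℝ/ℤ`. -/
noncomputable def rep (z : Circle1) : ℝ := (AddCircle.equivIco 1 0 z : ℝ)

/-- The circle map induced by a lift `F : ℝ → ℝ`. -/
noncomputable def cmap (F : ℝ → ℝ) : Circle1 → Circle1 := fun z => ((F (rep z) : ℝ) : Circle1)

/-- The data determining the `C^r` topology: all derivatives of order `≤ r`, viewed in the
space of functions `ℝ → ℝ` with the uniform-convergence topology. -/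
noncomputable def crSeq (r : ℕ∞) (f : ℝ → ℝ) : ℕ → (ℝ →ᵤ ℝ) :=
  fun k => UniformFun.ofFun (if (k : ℕ∞) ≤ r then iteratedDeriv k f else 0)

/-- The space `𝓒^r` of `C^r` functions `ℝ/ℤ → ℝ`. -/
def CrFun (r : ℕ∞) : Type := {f : Circle1 → ℝ // ContDiff ℝ r fun x : ℝ => f ↑x}

/-- The `C^r` topology on `𝓒^r`. -/
noncomputable instance (r : ℕ∞) : TopologicalSpace (CrFun r) :=
  TopologicalSpace.induced (fun f : CrFun r => crSeq r fun x : ℝ => f.1 ↑x) inferInstance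

/-- `F : ℝ → ℝ` is a lift of a `C^r` expanding circle map: it is `C^r`, sends `x+1` to
`F x + d` for a fixed integer `d`, and `|(Fⁿ)'| ≥ C λⁿ` for some `C > 0`, `λ > 1`. -/
def ExpandingLift (r : ℕ∞) (F : ℝ → ℝ) : Prop :=
  ContDiff ℝ r F ∧ (∃ d : ℤ, ∀ x : ℝ, F (x + 1) = F x + d) ∧
    ∃ C > (0 : ℝ), ∃ l > (1 : ℝ), ∀ n : ℕ, 1 ≤ n → ∀ x : ℝ, C * l ^ n ≤ |deriv (F^[n]) x|

/-- The space `𝓔^r` of (lifts of) `C^r` expanding circle maps, with the `C^r` topology. -/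
def ExpMap (r : ℕ∞) : Type := {F : ℝ → ℝ // ExpandingLift r F}

noncomputable instance (r : ℕ∞) : TopologicalSpace (ExpMap r) :=
  TopologicalSpace.induced (fun F : ExpMap r => crSeq r F.1) inferInstance

/-- `μ` is a `T`-invariant Borel probability measure. -/
def InvProb (T : Circle1 → Circle1) (μ : Measure Circle1) : Prop :=
  IsProbabilityMeasure μ ∧ μ.map T = μ

/-- `β(f,T)`, the maximal ergodic average. -/
noncomputable def beta (f : Circle1 → ℝ) (T : Circle1 → Circle1) : ℝ :=
  sSup ((fun μ : Measure Circle1 => ∫ x, f x ∂μ) '' {μ | InvProb T μ})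

/-- `μ` is a maximizing measure for `(f,T)`. -/
def IsMaximizing (f : Circle1 → ℝ) (T : Circle1 → Circle1) (μ : Measure Circle1) : Prop :=
  InvProb T μ ∧ ∫ x, f x ∂μ = beta f T

/-- `μ` is a periodic measure: an invariant measure supported on a periodic orbit. -/
def IsPeriodicMeasure (T : Circle1 → Circle1) (μ : Measure Circle1) : Prop :=
  InvProb T μ ∧ ∃ x : Circle1, ∃ n : ℕ, 0 < n ∧ T^[n] x = x ∧
    μ (Set.range fun k : ℕ => T^[k] x) = 1

/-- `(f,T)` is uniquely maximized by a periodic measure. -/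
def UniqMaxPeriodic (f : Circle1 → ℝ) (T : Circle1 → Circle1) : Prop :=
  ∃ μ : Measure Circle1, IsMaximizing f T μ ∧ IsPeriodicMeasure T μ ∧
    ∀ ν : Measure Circle1, IsMaximizing f T ν → ν = μ

/-- A (continuous) sub-action for `(f,T)`. -/
def IsSubaction (f : Circle1 → ℝ) (T : Circle1 → Circle1) (g : Circle1 → ℝ) : Prop :=
  Continuous g ∧ ∀ x, g x + f x ≤ g (T x) + beta f T

/-- A calibrated sub-action for `(f,T)`. -/
def IsCalibrated (f : Circle1 → ℝ) (T : Circle1 → Circle1) (g : Circle1 → ℝ) : Prop :=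
  IsSubaction f T g ∧ ∀ x, ∃ y, T y = x ∧ g y + f y = g x + beta f T

/-- `G_{f,T}`: the set of Lipschitz calibrated sub-actions of `(f,T)`. -/
def Gset (f : Circle1 → ℝ) (T : Circle1 → Circle1) : Set (Circle1 → ℝ) :=
  {g | (∃ K : NNReal, LipschitzWith K g) ∧ IsCalibrated f T g}

/-- The set `E_{f,T,g}`. -/
def Eset (f : Circle1 → ℝ) (T : Circle1 → Circle1) (g : Circle1 → ℝ) : Set Circle1 :=
  {x | g x + f x = g (T x) + beta f T}

/-- The set `Λ*_{f,T,g}`. -/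
def LambdaStar (f : Circle1 → ℝ) (T : Circle1 → Circle1) (g : Circle1 → ℝ) : Set Circle1 :=
  {x | ∀ n : ℕ, T^[n] x ∈ Eset f T g}

/-- The set `Λ_{f,T,g}`. -/
def Lambda (f : Circle1 → ℝ) (T : Circle1 → Circle1) (g : Circle1 → ℝ) : Set Circle1 :=
  ⋂ n : ℕ, T^[n] '' LambdaStar f T g

/-- The set `K(f,T)`. -/
def Kset (f : Circle1 → ℝ) (T : Circle1 → Circle1) : Set Circle1 :=
  ⋃ g ∈ Gset f T, Lambda f T g

/-- The `(f,T)`-non-wandering set `Ω(f,T)`. -/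
def OmegaSet (f : Circle1 → ℝ) (T : Circle1 → Circle1) : Set Circle1 :=
  {x | ∀ ε > (0 : ℝ), ∃ n : ℕ, 1 ≤ n ∧ ∃ z : Circle1, T^[n] z = x ∧ dist z x < ε ∧
    |∑ i ∈ Finset.range n, (f (T^[i] z) - beta f T)| < ε}

/-- `A` is a periodic orbit of `T`. -/
def IsPeriodicOrbit (T : Circle1 → Circle1) (A : Set Circle1) : Prop :=
  ∃ x : Circle1, (∃ n : ℕ, 0 < n ∧ T^[n] x = x) ∧ A = Set.range fun k : ℕ => T^[k] x

/-- `A` is a `T`-minimal set: a nonempty compact invariant set with no proper nonempty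
compact invariant subset. -/
def IsMinimalSet (T : Circle1 → Circle1) (A : Set Circle1) : Prop :=
  A.Nonempty ∧ IsCompact A ∧ T '' A ⊆ A ∧
    ∀ B ⊆ A, B.Nonempty → IsCompact B → T '' B ⊆ B → B = A

/-- The space of `C^r` families of functions on the circle with `q` parameters,
i.e. maps `(t,x) ↦ f_t(x)` that are jointly `C^r` (the circle variable via a lift). -/
def FamFun (r : ℕ∞) (q : ℕ) : Type :=
  {G : ((Fin q → ℝ) × ℝ) → ℝ // ContDiff ℝ r G ∧ ∀ t x, G (t, x + 1) = G (t, x)}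

noncomputable def famSeq (r : ℕ∞) (q : ℕ) (G : ((Fin q → ℝ) × ℝ) → ℝ) :
    (k : ℕ) → (((Fin q → ℝ) × ℝ) →ᵤ (((Fin q → ℝ) × ℝ) [×k]→L[ℝ] ℝ)) :=
  fun k => UniformFun.ofFun (if (k : ℕ∞) ≤ r then iteratedFDeriv ℝ k G else 0)

/-- The `C^r` topology on the space of `C^r` families. -/
noncomputable instance (r : ℕ∞) (q : ℕ) : TopologicalSpace (FamFun r q) :=
  TopologicalSpace.induced (fun G : FamFun r q => famSeq r q G.1) inferInstance

/-- The member `f_t : ℝ/ℤ → ℝ` of a family, at the parameter `t`. -/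
noncomputable def famMem {r : ℕ∞} {q : ℕ} (G : FamFun r q) (t : Fin q → ℝ) : Circle1 → ℝ :=
  fun z => G.1 (t, rep z)

/-- The product `m_∞` over `ℕ` of Lebesgue measure on `[0,1]`, realised as the pushforward of
the Haar probability measure of the compact group `(ℝ/ℤ)^ℕ` under the coordinatewise choice of
representatives in `[0,1)`. -/
noncomputable def mInfty : Measure (ℕ → ℝ) :=
  Measure.map (fun (t : ℕ → Circle1) (n : ℕ) => rep (t n))
    (MeasureTheory.Measure.addHaarMeasure (⊤ : TopologicalSpace.PositiveCompacts (ℕ → Circle1)))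

/-- `S` is an `N`-dimensionally shy subset of a normed real vector space `V`. -/
def NDimShy {V : Type*} [NormedAddCommGroup V] [NormedSpace ℝ V] (N : ℕ) (S : Set V) : Prop :=
  ∃ φ : Fin N → V, ∀ f : V,
    volume {t : Fin N → ℝ | (∀ i, t i ∈ Set.Icc (0 : ℝ) 1) ∧ f + ∑ i, t i • φ i ∈ S} = 0

/-- `S` is a finite dimensionally shy subset of a normed real vector space `V`. -/
def FinDimShy {V : Type*} [NormedAddCommGroup V] [NormedSpace ℝ V] (S : Set V) : Prop :=
  ∃ N : ℕ, 0 < N ∧ NDimShy N S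

/-- `S` is a shy subset of `V`: there are a compactly supported Borel probability measure `μ`
on `V` and a Borel set `S̃ ⊇ S` all of whose translates are `μ`-null. -/
def IsShy {V : Type*} [NormedAddCommGroup V] [NormedSpace ℝ V] (S : Set V) : Prop :=
  letI : MeasurableSpace V := borel V
  ∃ μ : Measure V, μ Set.univ = 1 ∧ (∃ K : Set V, IsCompact K ∧ μ K = 1) ∧
    ∃ St : Set V, MeasurableSet St ∧ S ⊆ St ∧
      ∀ v : V, μ ((fun x => x + v) ⁻¹' St) = 0

/-- `S` is a prevalent subset of `V`. -/
def IsPrevalent {V : Type*} [NormedAddCommGroup V] [NormedSpace ℝ V] (S : Set V) : Prop :=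
  IsShy Sᶜ

/-- `F` is the (normalized) lift of an orientation-preserving real analytic expanding circle
map of degree `d` fixing `π(0)`. -/
def AnalyticExpandingLift (F : ℝ → ℝ) (d : ℕ) : Prop :=
  (∀ x : ℝ, AnalyticAt ℝ F x) ∧ (∀ x : ℝ, F (x + 1) = F x + d) ∧ StrictMono F ∧ F 0 = 0 ∧
    2 ≤ d ∧ ∃ C > (0 : ℝ), ∃ l > (1 : ℝ), ∀ n : ℕ, 1 ≤ n → ∀ x : ℝ, C * l ^ n ≤ |deriv (F^[n]) x|

/-- The inverse branches `τ_{i,n} = τ_{i_n} ∘ ⋯ ∘ τ_{i_1}`, where `τ = F⁻¹` and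
`τ_i(x) = τ(x+i)`; the word `i` is indexed from `0`, so `i 0` is the first letter `i_1`. -/
noncomputable def tauIter (F : ℝ → ℝ) {d : ℕ} (i : ℕ → Fin d) : ℕ → ℝ → ℝ
  | 0, x => x
  | n + 1, x => Function.invFun F (tauIter F i n x + ((i n : ℕ) : ℝ))

/-- The function `h^f_i` associated to an infinite word `i`. -/
noncomputable def hSum (F : ℝ → ℝ) {d : ℕ} (i : ℕ → Fin d) (f : Circle1 → ℝ) : ℝ → ℝ :=
  fun x => ∑' n : ℕ,
    (f ((tauIter F i (n + 1) x : ℝ) : Circle1) - f ((tauIter F i (n + 1) 0 : ℝ) : Circle1))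

/-- The function `h^f_i` associated to a finite word of length `m` (the first `m` letters
of `i`). -/
noncomputable def hSumFin (F : ℝ → ℝ) {d : ℕ} (i : ℕ → Fin d) (m : ℕ) (f : Circle1 → ℝ) :
    ℝ → ℝ :=
  fun x => ∑ n ∈ Finset.range m,
    (f ((tauIter F i (n + 1) x : ℝ) : Circle1) - f ((tauIter F i (n + 1) 0 : ℝ) : Circle1))

/-- `i ∈ CL(x,K)`: all backward images of `x` along the word `i` lie over `K`. -/
def WordIn (F : ℝ → ℝ) {d : ℕ} (i : ℕ → Fin d) (x : ℝ) (K : Set Circle1) : Prop :=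
  ∀ n : ℕ, 1 ≤ n → ((tauIter F i n x : ℝ) : Circle1) ∈ K

/-- `x` (a real, lying over `K`) is an `f`-supercritical value of `K`. -/
def IsSupercriticalValue (F : ℝ → ℝ) (d : ℕ) (f : Circle1 → ℝ) (K : Set Circle1) (x : ℝ) :
    Prop :=
  ((x : ℝ) : Circle1) ∈ K ∧ ∃ i j : ℕ → Fin d, WordIn F i x K ∧ WordIn F j x K ∧ i 0 ≠ j 0 ∧
    deriv (hSum F i f) x = deriv (hSum F j f) x

/-- `x` is a critical value of `T|K`. -/
def IsCriticalValue (T : Circle1 → Circle1) (K : Set Circle1) (x : Circle1) : Prop :=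
  x ∈ K ∧ ∃ y z, y ∈ K ∧ z ∈ K ∧ y ≠ z ∧ T y = x ∧ T z = x

/-- A critical value `x` of `T|K` is regular: on each side of `x` there is a continuous
inverse branch of `T` selecting the unique preimage in `K`. -/
def IsRegularCriticalValue (T : Circle1 → Circle1) (K : Set Circle1) (x : Circle1) : Prop :=
  ∃ U : Set Circle1, U ∈ 𝓝 x ∧ IsConnected U ∧
    ∀ b ∈ U \ {x}, ∃ s : Circle1 → Circle1,
      ContinuousOn s (connectedComponentIn (U \ {x}) b) ∧
      (∀ y ∈ connectedComponentIn (U \ {x}) b, T (s y) = y) ∧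
      (∀ y ∈ K ∩ connectedComponentIn (U \ {x}) b, T ⁻¹' {y} ∩ K = {s y})

/-- `T|K` is Sturmian-like: every critical value is regular. -/
def SturmianLike (T : Circle1 → Circle1) (K : Set Circle1) : Prop :=
  ∀ x, IsCriticalValue T K x → IsRegularCriticalValue T K x

/-- `f : ℝ/ℤ → ℝ` is a trigonometric polynomial. -/
def IsTrigPoly (f : Circle1 → ℝ) : Prop :=
  ∃ m : ℕ, ∃ a b : ℕ → ℝ, ∀ x : ℝ,
    f ↑x = a 0 + ∑ k ∈ Finset.range m,
      (a (k + 1) * Real.cos (2 * Real.pi * (k + 1) * x) +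
        b (k + 1) * Real.sin (2 * Real.pi * (k + 1) * x))

end

/-! ### Empirical measures and invariant measures -/

section Empirical

variable {X : Type*} [MeasurableSpace X] {T : X → X}

/-- The empirical measure of the orbit segment `x, T x, …, T^{n-1} x`: the uniform average of the
Dirac masses at these `n` points. It is a probability measure only for `n ≠ 0`. -/
noncomputable def empiricalMeasure (T : X → X) (n : ℕ) (x : X) : Measure X :=
  (n : ENNReal)⁻¹ • ∑ k ∈ Finset.range n, Measure.dirac (T^[k] x)

theorem isProbabilityMeasure_empiricalMeasure {n : ℕ} (hn : n ≠ 0) (x : X) :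
    IsProbabilityMeasure (empiricalMeasure T n x) where
  measure_univ := by
    simp only [empiricalMeasure, Measure.smul_apply, Measure.finsetSum_apply, measure_univ,
      Finset.sum_const, Finset.card_range, nsmul_eq_mul, mul_one, smul_eq_mul]
    exact ENNReal.inv_mul_cancel (Nat.cast_ne_zero.2 hn) (ENNReal.natCast_ne_top n)

theorem integral_empiricalMeasure [MeasurableSingletonClass X] (φ : X → ℝ) (n : ℕ) (x : X) :
    ∫ z, φ z ∂empiricalMeasure T n x = birkhoffAverage ℝ T φ n x := by
  rw [empiricalMeasure, integral_smul_measure,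
    integral_finsetSum_measure fun k _ => integrable_dirac (by simp)]
  simp [integral_dirac, birkhoffAverage, birkhoffSum]

end Empirical

section KrylovBogolyubov

variable {X : Type*} [MetricSpace X] [MeasurableSpace X] [BorelSpace X] {T : X → X}

theorem measurePreserving_of_tendsto_birkhoffAverage {ι : Type*} {l : Filter ι} [l.NeBot]
    {μ : Measure X} [IsFiniteMeasure μ] (hT : Continuous T) {N : ι → ℕ} {x : ι → X}
    (hN : Tendsto N l atTop)
    (hlim : ∀ φ : BoundedContinuousFunction X ℝ,
      Tendsto (fun i => birkhoffAverage ℝ T φ (N i) (x i)) l (𝓝 (∫ z, φ z ∂μ))) :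
    MeasurePreserving T μ μ := by
  refine ⟨hT.measurable, ext_of_forall_integral_eq_of_IsFiniteMeasure fun φ => ?_⟩
  rw [integral_map hT.aemeasurable φ.continuous.aestronglyMeasurable]
  have hshift : Tendsto (fun i => birkhoffAverage ℝ T φ (N i) (T (x i)) -
      birkhoffAverage ℝ T φ (N i) (x i)) l (𝓝 0) := by
    have hbound : Tendsto (fun i => 2 * ‖φ‖ / N i) l (𝓝 0) :=
      (tendsto_const_div_atTop_nhds_zero_nat _).comp hN
    refine squeeze_zero_norm (fun i => ?_) hbound
    rw [← dist_eq_norm, dist_birkhoffAverage_apply_birkhoffAverage]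
    gcongr
    exact φ.dist_le_two_norm _ _
  have hcomp (i : ι) : birkhoffAverage ℝ T (φ.compContinuous ⟨T, hT⟩) (N i) (x i) =
      birkhoffAverage ℝ T φ (N i) (T (x i)) := by
    simp only [birkhoffAverage, birkhoffSum, BoundedContinuousFunction.compContinuous_apply,
      ContinuousMap.coe_mk, ← Function.iterate_succ_apply, ← Function.iterate_succ_apply']
  refine tendsto_nhds_unique (hlim (φ.compContinuous ⟨T, hT⟩)) ?_
  simpa only [hcomp, add_sub_cancel, add_zero] using (hlim φ).add hshift

theorem exists_measurePreserving_le_integral [CompactSpace X] (hT : Continuous T) {φ : X → ℝ}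
    (hφ : Continuous φ) {a : ℝ}
    (h : ∃ᶠ n in atTop, ∃ z, a ≤ birkhoffAverage ℝ T φ n z) :
    ∃ μ : Measure X, IsProbabilityMeasure μ ∧ MeasurePreserving T μ μ ∧ a ≤ ∫ x, φ x ∂μ := by
  obtain ⟨N, hN, hNz⟩ := exists_seq_forall_of_frequently (h.and_eventually (eventually_gt_atTop 0))
  choose z hz using fun i => (hNz i).1
  let m (i : ℕ) : ProbabilityMeasure X :=
    ⟨empiricalMeasure T (N i) (z i), isProbabilityMeasure_empiricalMeasure (hNz i).2.ne' _⟩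
  obtain ⟨μ, -, hμ⟩ := isCompact_univ.ultrafilter_le_nhds ((hyperfilter ℕ).map m) (by simp)
  have hlim (ψ : BoundedContinuousFunction X ℝ) :
      Tendsto (fun i => birkhoffAverage ℝ T ψ (N i) (z i)) (hyperfilter ℕ)
        (𝓝 (∫ x, ψ x ∂(μ : Measure X))) := by
    simpa only [integral_empiricalMeasure, m, ProbabilityMeasure.coe_mk] using
      ProbabilityMeasure.tendsto_iff_forall_integral_tendsto.1 hμ ψ
  refine ⟨μ, inferInstance, measurePreserving_of_tendsto_birkhoffAverage hT
    (hN.mono_left Nat.hyperfilter_le_atTop) hlim, ?_⟩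
  exact ge_of_tendsto' (hlim (.mkOfCompact ⟨φ, hφ⟩)) hz

end KrylovBogolyubov

/-! ### Contracting inverse branches and calibrated functions -/

section Branches

variable {X : Type*} [PseudoMetricSpace X] {T : X → X} {φ : X → ℝ}

/-- Uniform contraction along inverse branches: every orbit segment `y, T y, …, T^n y` can be
followed by one that ends at a prescribed point `x`, the distance between the two decaying
geometrically backwards in time. The case `k = n` is excluded, so that `C < 1` is allowed. -/
def HasContractingBranches (T : X → X) : Prop :=
  ∃ C r : NNReal, r < 1 ∧ ∀ (n : ℕ) (y x : X), ∃ y', T^[n] y' = x ∧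
    ∀ k < n, dist (T^[k] y) (T^[k] y') ≤ C * r ^ (n - k) * dist (T^[n] y) x

/-- The Birkhoff sums of `φ`, viewed as multivalued functions of the end point of the orbit
segment, are `D`-Lipschitz, with `D` independent of the length `n`. -/
def LipschitzBirkhoffSums (D : NNReal) (T : X → X) (φ : X → ℝ) : Prop :=
  ∀ (n : ℕ) (y x : X), ∃ y', T^[n] y' = x ∧
    birkhoffSum T φ n y ≤ birkhoffSum T φ n y' + D * dist (T^[n] y) x

theorem sum_range_pow_sub_le {r : NNReal} (hr : r < 1) (n : ℕ) :
    ∑ k ∈ Finset.range n, r ^ (n - k) ≤ (1 - r)⁻¹ :=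
  calc ∑ k ∈ Finset.range n, r ^ (n - k)
      ≤ ∑ k ∈ Finset.range n, r ^ (n - 1 - k) :=
        Finset.sum_le_sum fun k _ => pow_le_pow_of_le_one zero_le hr.le (by omega)
    _ = ∑ j ∈ Finset.range n, r ^ j := Finset.sum_range_reflect (fun j => r ^ j) n
    _ ≤ ∑' j, r ^ j := (NNReal.summable_geometric hr).sum_le_tsum _ fun _ _ => zero_le
    _ = (1 - r)⁻¹ := NNReal.tsum_geometric hr

theorem HasContractingBranches.exists_lipschitzBirkhoffSums (hT : HasContractingBranches T)
    {L : NNReal} (hφ : LipschitzWith L φ) : ∃ D, LipschitzBirkhoffSums D T φ := by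
  obtain ⟨C, r, hr, hbranch⟩ := hT
  refine ⟨L * C * (1 - r)⁻¹, fun n y x => ?_⟩
  obtain ⟨y', hy', hclose⟩ := hbranch n y x
  refine ⟨y', hy', ?_⟩
  have hterm : ∀ k ∈ Finset.range n,
      φ (T^[k] y) ≤ φ (T^[k] y') + L * C * dist (T^[n] y) x * r ^ (n - k) := fun k hk =>
    calc φ (T^[k] y) ≤ φ (T^[k] y') + L * dist (T^[k] y) (T^[k] y') := hφ.le_add_mul _ _
      _ ≤ φ (T^[k] y') + L * (C * r ^ (n - k) * dist (T^[n] y) x) := by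
        gcongr
        exact hclose k (Finset.mem_range.1 hk)
      _ = φ (T^[k] y') + L * C * dist (T^[n] y) x * r ^ (n - k) := by ring
  have hgeom : ∑ k ∈ Finset.range n, (r : ℝ) ^ (n - k) ≤ ((1 - r)⁻¹ : NNReal) :=
    mod_cast sum_range_pow_sub_le hr n
  calc birkhoffSum T φ n y
      ≤ birkhoffSum T φ n y' +
          L * C * dist (T^[n] y) x * ∑ k ∈ Finset.range n, (r : ℝ) ^ (n - k) := by
        rw [birkhoffSum, birkhoffSum, Finset.mul_sum, ← Finset.sum_add_distrib]
        exact Finset.sum_le_sum hterm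
    _ ≤ birkhoffSum T φ n y' + L * C * dist (T^[n] y) x * ((1 - r)⁻¹ : NNReal) := by gcongr
    _ = birkhoffSum T φ n y' + (L * C * (1 - r)⁻¹ : NNReal) * dist (T^[n] y) x := by
        push_cast
        ring

theorem LipschitzBirkhoffSums.surjective {D : NNReal} (h : LipschitzBirkhoffSums D T φ) :
    Function.Surjective T := fun x =>
  let ⟨y, hy, _⟩ := h 1 x x
  ⟨y, hy⟩

theorem LipschitzBirkhoffSums.sub_const {D : NNReal} (h : LipschitzBirkhoffSums D T φ) (c : ℝ) :
    LipschitzBirkhoffSums D T fun x => φ x - c := fun n y x => by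
  obtain ⟨y', hy', hle⟩ := h n y x
  refine ⟨y', hy', ?_⟩
  simp only [birkhoffSum, Finset.sum_sub_distrib] at hle ⊢
  linarith

end Branches

section FiberSup

variable {X : Type*} {T : X → X} {φ : X → ℝ} {B : ℝ}

/-- The supremum of the Birkhoff sums of `φ` over all orbit segments of length at least `N` that
end at `x`. It is meaningful only when `T` is surjective and the Birkhoff sums are bounded
above. -/
noncomputable def fiberSup (T : X → X) (φ : X → ℝ) (N : ℕ) (x : X) : ℝ :=
  sSup {s | ∃ n y, N ≤ n ∧ T^[n] y = x ∧ birkhoffSum T φ n y = s}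

/-- The limit superior, as `n → ∞`, of the suprema of the `n`-th Birkhoff sums of `φ` over the
fibres `T^n y = x`; when finite everywhere, it is the calibrated function we are looking for. -/
noncomputable def fiberLimsup (T : X → X) (φ : X → ℝ) (x : X) : ℝ :=
  ⨅ N, fiberSup T φ N x

theorem le_fiberSup (hup : ∀ n y, birkhoffSum T φ n y ≤ B) {N n : ℕ} (hn : N ≤ n) (y : X) :
    birkhoffSum T φ n y ≤ fiberSup T φ N (T^[n] y) := by
  refine le_csSup ⟨B, ?_⟩ ⟨n, y, hn, rfl, rfl⟩
  rintro _ ⟨k, z, -, -, rfl⟩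
  exact hup k z

theorem fiberSup_le (hT : Function.Surjective T) {N : ℕ} {x : X} {b : ℝ}
    (h : ∀ n y, N ≤ n → T^[n] y = x → birkhoffSum T φ n y ≤ b) : fiberSup T φ N x ≤ b := by
  obtain ⟨y, hy⟩ := hT.iterate N x
  refine csSup_le ⟨_, N, y, le_rfl, hy, rfl⟩ ?_
  rintro _ ⟨n, z, hn, hz, rfl⟩
  exact h n z hn hz

theorem antitone_fiberSup (hT : Function.Surjective T) (hup : ∀ n y, birkhoffSum T φ n y ≤ B)
    (x : X) : Antitone fun N => fiberSup T φ N x := by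
  refine fun M N hMN => fiberSup_le hT ?_
  rintro n y hn rfl
  exact le_fiberSup hup (hMN.trans hn) y

theorem fiberSup_add_le (hT : Function.Surjective T) (hup : ∀ n y, birkhoffSum T φ n y ≤ B)
    (N : ℕ) (x : X) : fiberSup T φ N x + φ x ≤ fiberSup T φ (N + 1) (T x) := by
  rw [← le_sub_iff_add_le]
  refine fiberSup_le hT ?_
  rintro n y hn rfl
  rw [le_sub_iff_add_le, ← birkhoffSum_succ, ← Function.iterate_succ_apply' T]
  exact le_fiberSup hup (Nat.succ_le_succ hn) y

end FiberSup

section Calibrated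

variable {X : Type*} [MetricSpace X] {T : X → X} {φ : X → ℝ} {B : ℝ} {D : NNReal}

theorem lipschitzWith_fiberSup (hD : LipschitzBirkhoffSums D T φ)
    (hup : ∀ n y, birkhoffSum T φ n y ≤ B) (N : ℕ) : LipschitzWith D (fiberSup T φ N) := by
  refine LipschitzWith.of_le_add_mul D fun x x' => fiberSup_le hD.surjective ?_
  rintro n y hn rfl
  obtain ⟨y', rfl, hle⟩ := hD n y x'
  exact hle.trans (by gcongr; exact le_fiberSup hup hn y')

variable [CompactSpace X]

theorem neg_mul_diam_le_fiberSup (hD : LipschitzBirkhoffSums D T φ)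
    (hup : ∀ n y, birkhoffSum T φ n y ≤ B) (hlow : ∀ n, ∃ y, 0 ≤ birkhoffSum T φ n y)
    (N : ℕ) (x : X) : -(D * Metric.diam (univ : Set X)) ≤ fiberSup T φ N x := by
  obtain ⟨y, hy⟩ := hlow N
  have hmem := le_fiberSup hup (le_refl N) y
  have hLip := (lipschitzWith_fiberSup hD hup N).le_add_mul (T^[N] y) x
  have hdist : dist (T^[N] y) x ≤ Metric.diam (univ : Set X) :=
    Metric.dist_le_diam_of_mem Metric.isBounded_of_compactSpace (mem_univ _) (mem_univ _)
  have := mul_le_mul_of_nonneg_left hdist D.coe_nonneg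
  linarith

theorem exists_fiberSup_succ_le (hT : Continuous T) (hφ : Continuous φ)
    (hD : LipschitzBirkhoffSums D T φ) (hup : ∀ n y, birkhoffSum T φ n y ≤ B) (N : ℕ) (x : X) :
    ∃ y, T y = x ∧ fiberSup T φ (N + 1) x ≤ fiberSup T φ N y + φ y := by
  have hfiber : IsCompact {y | T y = x} := (isClosed_eq hT continuous_const).isCompact
  obtain ⟨y, hy, hmax⟩ := hfiber.exists_isMaxOn (hD.surjective x)
    ((lipschitzWith_fiberSup hD hup N).continuous.add hφ).continuousOn
  refine ⟨y, hy, fiberSup_le hD.surjective fun n z hn hz => ?_⟩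
  obtain ⟨m, rfl⟩ := Nat.exists_eq_succ_of_ne_zero (Nat.ne_zero_of_lt hn)
  rw [Function.iterate_succ_apply'] at hz
  calc birkhoffSum T φ (m + 1) z = birkhoffSum T φ m z + φ (T^[m] z) := birkhoffSum_succ ..
    _ ≤ fiberSup T φ N (T^[m] z) + φ (T^[m] z) := by
      gcongr
      exact le_fiberSup hup (Nat.le_of_succ_le_succ hn) z
    _ ≤ fiberSup T φ N y + φ y := hmax hz

theorem fiberLimsup_le_fiberSup (hD : LipschitzBirkhoffSums D T φ)
    (hup : ∀ n y, birkhoffSum T φ n y ≤ B) (hlow : ∀ n, ∃ y, 0 ≤ birkhoffSum T φ n y)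
    (N : ℕ) (x : X) : fiberLimsup T φ x ≤ fiberSup T φ N x :=
  ciInf_le ⟨_, forall_mem_range.2 fun M => neg_mul_diam_le_fiberSup hD hup hlow M x⟩ N

theorem lipschitzWith_fiberLimsup (hD : LipschitzBirkhoffSums D T φ)
    (hup : ∀ n y, birkhoffSum T φ n y ≤ B) (hlow : ∀ n, ∃ y, 0 ≤ birkhoffSum T φ n y) :
    LipschitzWith D (fiberLimsup T φ) := by
  refine LipschitzWith.of_le_add_mul D fun x x' => ?_
  rw [← sub_le_iff_le_add]
  refine le_ciInf fun N => sub_le_iff_le_add.2 ?_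
  exact (fiberLimsup_le_fiberSup hD hup hlow N x).trans
    ((lipschitzWith_fiberSup hD hup N).le_add_mul x x')

theorem fiberLimsup_add_le (hD : LipschitzBirkhoffSums D T φ)
    (hup : ∀ n y, birkhoffSum T φ n y ≤ B) (hlow : ∀ n, ∃ y, 0 ≤ birkhoffSum T φ n y) (x : X) :
    fiberLimsup T φ x + φ x ≤ fiberLimsup T φ (T x) :=
  le_ciInf fun N =>
    calc fiberLimsup T φ x + φ x ≤ fiberSup T φ N x + φ x := by
          gcongr
          exact fiberLimsup_le_fiberSup hD hup hlow N x
      _ ≤ fiberSup T φ (N + 1) (T x) := fiberSup_add_le hD.surjective hup N x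
      _ ≤ fiberSup T φ N (T x) := antitone_fiberSup hD.surjective hup _ N.le_succ

theorem exists_le_fiberLimsup_add (hT : Continuous T) (hφ : Continuous φ)
    (hD : LipschitzBirkhoffSums D T φ) (hup : ∀ n y, birkhoffSum T φ n y ≤ B)
    (hlow : ∀ n, ∃ y, 0 ≤ birkhoffSum T φ n y) (x : X) :
    ∃ y, T y = x ∧ fiberLimsup T φ x ≤ fiberLimsup T φ y + φ y := by
  let A (N : ℕ) : Set X := {y | T y = x} ∩ {y | fiberLimsup T φ x ≤ fiberSup T φ N y + φ y}
  have hA_closed (N : ℕ) : IsClosed (A N) :=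
    (isClosed_eq hT continuous_const).inter
      (isClosed_le continuous_const ((lipschitzWith_fiberSup hD hup N).continuous.add hφ))
  have hA_anti (N : ℕ) : A (N + 1) ⊆ A N := fun y ⟨hy, hle⟩ =>
    ⟨hy, hle.trans (add_le_add_left (antitone_fiberSup hD.surjective hup y N.le_succ) _)⟩
  have hA_nonempty (N : ℕ) : (A N).Nonempty :=
    let ⟨y, hy, hle⟩ := exists_fiberSup_succ_le hT hφ hD hup N x
    ⟨y, hy, (fiberLimsup_le_fiberSup hD hup hlow (N + 1) x).trans hle⟩
  obtain ⟨y, hy⟩ := IsCompact.nonempty_iInter_of_sequence_nonempty_isCompact_isClosed A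
    hA_anti hA_nonempty (hA_closed 0).isCompact hA_closed
  rw [mem_iInter] at hy
  refine ⟨y, (hy 0).1, ?_⟩
  rw [← sub_le_iff_le_add]
  exact le_ciInf fun N => sub_le_iff_le_add.2 (hy N).2

theorem exists_lipschitzWith_calibrated (hT : Continuous T) (hφ : Continuous φ)
    (hD : LipschitzBirkhoffSums D T φ) (hup : ∀ n y, birkhoffSum T φ n y ≤ B)
    (hlow : ∀ n, ∃ y, 0 ≤ birkhoffSum T φ n y) :
    ∃ g, LipschitzWith D g ∧ (∀ x, g x + φ x ≤ g (T x)) ∧ ∀ x, ∃ y, T y = x ∧ g y + φ y = g x := by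
  have hsub := fiberLimsup_add_le hD hup hlow
  refine ⟨fiberLimsup T φ, lipschitzWith_fiberLimsup hD hup hlow, hsub, fun x => ?_⟩
  obtain ⟨y, rfl, hle⟩ := exists_le_fiberLimsup_add hT hφ hD hup hlow x
  exact ⟨y, rfl, (hsub y).antisymm hle⟩

end Calibrated

/-! ### The maximal ergodic average -/

section InvariantIntegrals

variable {X : Type*} [MeasurableSpace X] {T : X → X} {φ : X → ℝ} {μ : Measure X}

theorem integral_comp_measurePreserving (hT : MeasurePreserving T μ μ)
    (hφ : AEStronglyMeasurable φ μ) : ∫ x, φ (T x) ∂μ = ∫ x, φ x ∂μ := by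
  rw [← integral_map hT.aemeasurable (hT.map_eq.symm ▸ hφ), hT.map_eq]

theorem integral_birkhoffSum (hT : MeasurePreserving T μ μ) (hφ : Integrable φ μ) (n : ℕ) :
    ∫ x, birkhoffSum T φ n x ∂μ = n * ∫ x, φ x ∂μ := by
  have hiter (k : ℕ) : ∫ x, φ (T^[k] x) ∂μ = ∫ x, φ x ∂μ :=
    integral_comp_measurePreserving (hT.iterate k) hφ.aestronglyMeasurable
  simp only [birkhoffSum]
  rw [integral_finsetSum (f := fun k x => φ (T^[k] x)) _ fun k _ =>
    (hT.iterate k).integrable_comp_of_integrable hφ]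
  simp only [hiter, Finset.sum_const, Finset.card_range, nsmul_eq_mul]

theorem integral_birkhoffAverage (hT : MeasurePreserving T μ μ) (hφ : Integrable φ μ) {n : ℕ}
    (hn : n ≠ 0) : ∫ x, birkhoffAverage ℝ T φ n x ∂μ = ∫ x, φ x ∂μ := by
  simp only [birkhoffAverage, smul_eq_mul]
  rw [integral_const_mul, integral_birkhoffSum hT hφ, inv_mul_cancel_left₀ (Nat.cast_ne_zero.2 hn)]

theorem integrable_of_continuous [TopologicalSpace X] [CompactSpace X] [OpensMeasurableSpace X]
    [IsFiniteMeasure μ] (hφ : Continuous φ) : Integrable φ μ :=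
  hφ.integrable_of_hasCompactSupport (HasCompactSupport.of_compactSpace φ)

theorem integral_le_of_forall_le [TopologicalSpace X] [CompactSpace X] [OpensMeasurableSpace X]
    [IsProbabilityMeasure μ] (hφ : Continuous φ) {b : ℝ} (hb : ∀ x, φ x ≤ b) :
    ∫ x, φ x ∂μ ≤ b :=
  (integral_mono (integrable_of_continuous hφ) (integrable_const b) hb).trans_eq (by simp)

end InvariantIntegrals

theorem continuous_birkhoffSum {X : Type*} [TopologicalSpace X] {T : X → X} {φ : X → ℝ}
    (hT : Continuous T) (hφ : Continuous φ) (n : ℕ) : Continuous (birkhoffSum T φ n) :=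
  continuous_finsetSum _ fun k _ => hφ.comp (hT.iterate k)

theorem continuous_birkhoffAverage {X : Type*} [TopologicalSpace X] {T : X → X} {φ : X → ℝ}
    (hT : Continuous T) (hφ : Continuous φ) (n : ℕ) : Continuous (birkhoffAverage ℝ T φ n) :=
  (continuous_birkhoffSum hT hφ n).const_smul (n : ℝ)⁻¹

theorem exists_mul_le_birkhoffSum_mul {X : Type*} [PseudoMetricSpace X] [CompactSpace X]
    {T : X → X} {φ : X → ℝ} {D : NNReal} (hD : LipschitzBirkhoffSums D T φ)
    (n : ℕ) (y : X) (m : ℕ) :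
    ∃ z, m * (birkhoffSum T φ n y - D * Metric.diam (univ : Set X)) ≤
      birkhoffSum T φ (m * n) z := by
  induction m with
  | zero => exact ⟨y, by simp⟩
  | succ m ih =>
    obtain ⟨z, hz⟩ := ih
    obtain ⟨w, rfl, hw⟩ := hD n y z
    have hdist : dist (T^[n] y) (T^[n] w) ≤ Metric.diam (univ : Set X) :=
      Metric.dist_le_diam_of_mem Metric.isBounded_of_compactSpace (mem_univ _) (mem_univ _)
    have := mul_le_mul_of_nonneg_left hdist D.coe_nonneg
    refine ⟨w, ?_⟩
    rw [Nat.succ_mul, add_comm (m * n), birkhoffSum_add]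
    push_cast
    linarith

section Beta

variable {f : Circle1 → ℝ} {T : Circle1 → Circle1} {μ : Measure Circle1}

theorem InvProb.measurePreserving (hT : Continuous T) (hμ : InvProb T μ) :
    MeasurePreserving T μ μ :=
  ⟨hT.measurable, hμ.2⟩

theorem exists_invProb (hT : Continuous T) : ∃ μ, InvProb T μ := by
  obtain ⟨μ, hprob, hμ, -⟩ := exists_measurePreserving_le_integral hT (a := 0)
    (continuous_const (y := (0 : ℝ)))
    (Eventually.of_forall fun n => ⟨0, by simp [birkhoffAverage, birkhoffSum]⟩).frequently
  exact ⟨μ, hprob, hμ.map_eq⟩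

theorem integral_le_beta (hf : Continuous f) (hμ : InvProb T μ) : ∫ x, f x ∂μ ≤ beta f T := by
  obtain ⟨x, -, hx⟩ := isCompact_univ.exists_isMaxOn univ_nonempty hf.continuousOn
  refine le_csSup ⟨f x, ?_⟩ ⟨μ, hμ, rfl⟩
  rintro _ ⟨ν, ⟨_, -⟩, rfl⟩
  exact integral_le_of_forall_le hf fun z => hx (mem_univ z)

theorem exists_mul_beta_le_birkhoffSum (hT : Continuous T) (hf : Continuous f) (n : ℕ) :
    ∃ y, n * beta f T ≤ birkhoffSum T f n y := by
  obtain ⟨y, -, hy⟩ := isCompact_univ.exists_isMaxOn univ_nonempty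
    (continuous_birkhoffSum hT hf n).continuousOn
  refine ⟨y, ?_⟩
  obtain rfl | hn := n.eq_zero_or_pos
  · simp
  have hn' : (0 : ℝ) < n := Nat.cast_pos.2 hn
  rw [← le_div_iff₀' hn']
  refine csSup_le (Nonempty.image _ (exists_invProb hT)) ?_
  rintro _ ⟨μ, hμ, rfl⟩
  have := hμ.1
  rw [le_div_iff₀' hn',
    ← integral_birkhoffSum (hμ.measurePreserving hT) (integrable_of_continuous hf)]
  exact integral_le_of_forall_le (continuous_birkhoffSum hT hf n) fun z => hy (mem_univ z)

theorem birkhoffSum_le_mul_beta_add {D : NNReal} (hT : Continuous T) (hf : Continuous f)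
    (hD : LipschitzBirkhoffSums D T f) (n : ℕ) (y : Circle1) :
    birkhoffSum T f n y ≤ n * beta f T + D * Metric.diam (univ : Set Circle1) := by
  obtain rfl | hn := n.eq_zero_or_pos
  · simpa using mul_nonneg D.coe_nonneg Metric.diam_nonneg
  have hn' : (0 : ℝ) < n := Nat.cast_pos.2 hn
  have hfreq : ∃ᶠ N in atTop, ∃ z,
      (birkhoffSum T f n y - D * Metric.diam (univ : Set Circle1)) / n ≤
        birkhoffAverage ℝ T f N z := by
    refine frequently_atTop.2 fun M => ⟨(M + 1) * n, by nlinarith, ?_⟩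
    obtain ⟨z, hz⟩ := exists_mul_le_birkhoffSum_mul hD n y (M + 1)
    refine ⟨z, ?_⟩
    rw [birkhoffAverage, smul_eq_mul, le_inv_mul_iff₀ (by positivity)]
    refine le_of_eq_of_le ?_ hz
    push_cast
    field_simp
  obtain ⟨μ, hprob, hμ, hle⟩ := exists_measurePreserving_le_integral hT hf hfreq
  have := (div_le_iff₀' hn').1 (hle.trans (integral_le_beta hf ⟨hprob, hμ.map_eq⟩))
  linarith

theorem Gset_nonempty {L : NNReal} (hf : LipschitzWith L f) (hT : Continuous T)
    (hbr : HasContractingBranches T) : (Gset f T).Nonempty := by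
  obtain ⟨D, hD⟩ := hbr.exists_lipschitzBirkhoffSums hf
  have hsum (n : ℕ) (y : Circle1) :
      birkhoffSum T (fun x => f x - beta f T) n y = birkhoffSum T f n y - n * beta f T := by
    simp [birkhoffSum]
  obtain ⟨g, hLip, hsub, hcal⟩ := exists_lipschitzWith_calibrated
    (φ := fun x => f x - beta f T) (B := D * Metric.diam (univ : Set Circle1)) hT
    (hf.continuous.sub continuous_const) (hD.sub_const (beta f T))
    (fun n y => by
      rw [hsum, sub_le_iff_le_add']
      exact birkhoffSum_le_mul_beta_add hT hf.continuous hD n y)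
    (fun n => by
      simp only [hsum, sub_nonneg]
      exact exists_mul_beta_le_birkhoffSum hT hf.continuous n)
  refine ⟨g, ⟨D, hLip⟩, ⟨hLip.continuous, fun x => ?_⟩, fun x => ?_⟩
  · linarith [hsub x]
  · obtain ⟨y, hy, hgy⟩ := hcal x
    exact ⟨y, hy, by linarith⟩

end Beta

/-! ### Measures carried by `K(f,T)` -/

theorem birkhoffSum_of_coboundary {X : Type*} {T : X → X} {f g : X → ℝ} {c : ℝ} {x : X}
    (h : ∀ k, g (T^[k] x) + f (T^[k] x) = g (T^[k + 1] x) + c) (n : ℕ) :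
    birkhoffSum T f n x = n * c + (g (T^[n] x) - g x) := by
  have hterm (k : ℕ) : f (T^[k] x) = c + (g (T^[k + 1] x) - g (T^[k] x)) := by linarith [h k]
  simp only [birkhoffSum, hterm, Finset.sum_add_distrib, Finset.sum_const, Finset.card_range,
    nsmul_eq_mul, Finset.sum_range_sub fun k => g (T^[k] x), Function.iterate_zero, id_eq]

theorem tendsto_birkhoffAverage_of_coboundary {X : Type*} {T : X → X} {f g : X → ℝ} {c R : ℝ}
    {x : X} (hg : ∀ z, |g z| ≤ R)
    (h : ∀ k, g (T^[k] x) + f (T^[k] x) = g (T^[k + 1] x) + c) :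
    Tendsto (fun n => birkhoffAverage ℝ T f n x) atTop (𝓝 c) := by
  have hbdd (n : ℕ) : |g (T^[n] x) - g x| ≤ R + R := (abs_sub _ _).trans (add_le_add (hg _) (hg _))
  have hzero : Tendsto (fun n : ℕ => (n : ℝ)⁻¹ * (g (T^[n] x) - g x)) atTop (𝓝 0) := by
    refine squeeze_zero_norm (fun n => ?_) (tendsto_const_div_atTop_nhds_zero_nat (R + R))
    rw [norm_mul, norm_inv, Real.norm_natCast, ← div_eq_inv_mul]
    exact div_le_div_of_nonneg_right (hbdd n) n.cast_nonneg
  refine Tendsto.congr' ?_ (by simpa using hzero.const_add c)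
  filter_upwards [eventually_ne_atTop 0] with n hn
  have hn' : (n : ℝ) ≠ 0 := Nat.cast_ne_zero.2 hn
  rw [birkhoffAverage, birkhoffSum_of_coboundary h, smul_eq_mul, mul_add, inv_mul_cancel_left₀ hn']

theorem norm_birkhoffAverage_le {X : Type*} {T : X → X} {φ : X → ℝ} {B : ℝ} (hB : ∀ z, ‖φ z‖ ≤ B)
    (n : ℕ) (x : X) : ‖birkhoffAverage ℝ T φ n x‖ ≤ B := by
  have hsum : ‖birkhoffSum T φ n x‖ ≤ n * B :=
    (norm_sum_le_of_le _ fun k _ => hB _).trans_eq (by simp)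
  rw [birkhoffAverage, norm_smul, norm_inv, Real.norm_natCast]
  exact inv_mul_le_of_le_mul₀ n.cast_nonneg ((norm_nonneg _).trans (hB x)) hsum

theorem integral_eq_of_ae_tendsto_birkhoffAverage {X : Type*} [TopologicalSpace X] [CompactSpace X]
    [MeasurableSpace X] [BorelSpace X] {T : X → X} {φ : X → ℝ} {μ : Measure X}
    [IsProbabilityMeasure μ] (hT : Continuous T) (hμ : MeasurePreserving T μ μ)
    (hφ : Continuous φ) {c : ℝ}
    (hlim : ∀ᵐ x ∂μ, Tendsto (fun n => birkhoffAverage ℝ T φ n x) atTop (𝓝 c)) :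
    ∫ x, φ x ∂μ = c := by
  obtain ⟨B, hB⟩ := isCompact_univ.exists_bound_of_continuousOn hφ.continuousOn
  have hint := tendsto_integral_of_dominated_convergence (fun _ => B)
    (fun n => (continuous_birkhoffAverage hT hφ n).aestronglyMeasurable)
    (integrable_const B)
    (fun n => .of_forall (norm_birkhoffAverage_le (fun z => hB z (mem_univ z)) n)) hlim
  rw [integral_const, probReal_univ, one_smul] at hint
  refine tendsto_nhds_unique (tendsto_const_nhds.congr' ?_) hint
  filter_upwards [eventually_ne_atTop 0] with n hn
  exact (integral_birkhoffAverage hμ (integrable_of_continuous hφ) hn).symm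

section Carrier

variable {f g : Circle1 → ℝ} {T : Circle1 → Circle1} {μ : Measure Circle1}

theorem Lambda_subset_LambdaStar : Lambda f T g ⊆ LambdaStar f T g := fun x hx => by
  simpa using mem_iInter.1 hx 0

theorem tendsto_birkhoffAverage_of_mem_Kset {x : Circle1} (hx : x ∈ Kset f T) :
    Tendsto (fun n => birkhoffAverage ℝ T f n x) atTop (𝓝 (beta f T)) := by
  obtain ⟨g, ⟨-, ⟨hg, -⟩, -⟩, hxg⟩ := mem_iUnion₂.1 hx
  obtain ⟨R, hR⟩ := isCompact_univ.exists_bound_of_continuousOn hg.continuousOn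
  refine tendsto_birkhoffAverage_of_coboundary (fun z => hR z (mem_univ z)) fun k => ?_
  rw [Function.iterate_succ_apply']
  exact Lambda_subset_LambdaStar hxg k

theorem integral_eq_beta_of_measure_Kset (hf : Continuous f) (hT : Continuous T)
    (hμ : InvProb T μ) (hK : μ (Kset f T) = 1) : ∫ x, f x ∂μ = beta f T := by
  have := hμ.1
  -- `Kset f T` is not known to be measurable, but the set of convergence containing it is.
  have hmeas : MeasurableSet
      {x | Tendsto (fun n => birkhoffAverage ℝ T f n x) atTop (𝓝 (beta f T))} :=
    measurableSet_tendsto _ fun n => (continuous_birkhoffAverage hT hf n).measurable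
  refine integral_eq_of_ae_tendsto_birkhoffAverage hT (hμ.measurePreserving hT) hf ?_
  refine (mem_ae_iff_prob_eq_one hmeas).2 (le_antisymm prob_le_one ?_)
  exact hK ▸ measure_mono fun x => tendsto_birkhoffAverage_of_mem_Kset

theorem IsMaximizing.ae_mem_Eset (hμ : IsMaximizing f T μ) (hf : Continuous f) (hT : Continuous T)
    (hg : IsSubaction f T g) : ∀ᵐ x ∂μ, x ∈ Eset f T g := by
  have := hμ.1.1
  have hgT : Continuous fun x => g (T x) := hg.1.comp hT
  refine (integral_eq_iff_of_ae_le (integrable_of_continuous (hg.1.add hf))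
    (integrable_of_continuous (hgT.add continuous_const)) (.of_forall hg.2)).1 ?_
  simp only [Pi.add_apply]
  rw [integral_add (integrable_of_continuous hg.1) (integrable_of_continuous hf),
    integral_add (integrable_of_continuous hgT) (integrable_const _),
    integral_comp_measurePreserving (hμ.1.measurePreserving hT) hg.1.aestronglyMeasurable, hμ.2]
  simp

theorem IsMaximizing.ae_mem_LambdaStar (hμ : IsMaximizing f T μ) (hf : Continuous f)
    (hT : Continuous T) (hg : IsSubaction f T g) : ∀ᵐ x ∂μ, x ∈ LambdaStar f T g :=
  ae_all_iff.2 fun n => ((hμ.1.measurePreserving hT).iterate n).quasiMeasurePreserving.ae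
    (hμ.ae_mem_Eset hf hT hg)

theorem isCompact_LambdaStar (hf : Continuous f) (hT : Continuous T) (hg : Continuous g) :
    IsCompact (LambdaStar f T g) := by
  have hE : IsClosed (Eset f T g) := isClosed_eq (hg.add hf) ((hg.comp hT).add continuous_const)
  rw [LambdaStar, ofPred_forall]
  exact (isClosed_iInter fun n => hE.preimage (hT.iterate n)).isCompact

theorem ae_mem_image {X Y : Type*} [MeasurableSpace X] [MeasurableSpace Y] {μ : Measure X}
    {ν : Measure Y} {S : X → Y} (hS : MeasurePreserving S μ ν) {s : Set X}
    (hs : ∀ᵐ x ∂μ, x ∈ s) (him : MeasurableSet (S '' s)) : ∀ᵐ y ∂ν, y ∈ S '' s := by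
  rw [← hS.map_eq]
  exact (ae_map_iff hS.aemeasurable him).2 (hs.mono fun x => mem_image_of_mem S)

theorem IsMaximizing.ae_mem_Lambda (hμ : IsMaximizing f T μ) (hf : Continuous f)
    (hT : Continuous T) (hg : IsSubaction f T g) : ∀ᵐ x ∂μ, x ∈ Lambda f T g := by
  simp only [Lambda, mem_iInter]
  exact ae_all_iff.2 fun n => ae_mem_image ((hμ.1.measurePreserving hT).iterate n)
    (hμ.ae_mem_LambdaStar hf hT hg)
    ((isCompact_LambdaStar hf hT hg.1).image (hT.iterate n)).measurableSet

theorem IsMaximizing.measure_Kset (hμ : IsMaximizing f T μ) (hf : Continuous f) (hT : Continuous T)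
    (hG : (Gset f T).Nonempty) : μ (Kset f T) = 1 := by
  have := hμ.1.1
  obtain ⟨g, hg⟩ := hG
  have hK : ∀ᵐ x ∂μ, x ∈ Kset f T :=
    (hμ.ae_mem_Lambda hf hT hg.2.1).mono fun x hx => mem_biUnion hg hx
  exact (measure_congr (eventuallyEq_univ.2 hK)).trans measure_univ

end Carrier

theorem measures_on_K_eq_maximizing_general {f : Circle1 → ℝ} {T : Circle1 → Circle1} {L : NNReal}
    (hf : LipschitzWith L f) (hT : Continuous T) (hbr : HasContractingBranches T) :
    {μ : Measure Circle1 | InvProb T μ ∧ μ (Kset f T) = 1} =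
      {μ : Measure Circle1 | IsMaximizing f T μ} := by
  ext μ
  exact ⟨fun ⟨hμ, hK⟩ => ⟨hμ, integral_eq_beta_of_measure_Kset hf.continuous hT hμ hK⟩,
    fun hμ => ⟨hμ.1, hμ.measure_Kset hf.continuous hT (Gset_nonempty hf hT hbr)⟩⟩

/-! ### Circle maps and their lifts -/

theorem rep_coe (t : ℝ) : rep t = Int.fract t :=
  (AddCircle.coe_equivIco_mk_apply (1 : ℝ) t).trans (by rw [div_one, mul_one])

theorem coe_add_intCast (t : ℝ) (m : ℤ) : ((t + m : ℝ) : Circle1) = t := by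
  have hm : ((m : ℝ) : Circle1) = 0 := (AddCircle.coe_eq_zero_iff 1).2 ⟨m, by simp⟩
  rw [AddCircle.coe_add, hm, add_zero]

theorem exists_coe_eq_abs_sub_eq_dist (t : ℝ) (x : Circle1) :
    ∃ s : ℝ, (s : Circle1) = x ∧ |t - s| = dist (t : Circle1) x := by
  obtain ⟨s, rfl⟩ := QuotientAddGroup.mk_surjective x
  refine ⟨s + round (t - s), coe_add_intCast _ _, ?_⟩
  rw [← sub_sub, ← UnitAddCircle.norm_eq, AddCircle.coe_sub, ← dist_eq_norm]

theorem dist_coe_le_abs_sub (s t : ℝ) : dist (s : Circle1) t ≤ |s - t| := by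
  rw [dist_eq_norm, ← AddCircle.coe_sub, ← Real.norm_eq_abs]
  exact QuotientAddGroup.norm_mk_le_norm

theorem lipschitzWith_of_comp_coe {α : Type*} [PseudoMetricSpace α] {f : Circle1 → α} {L : NNReal}
    (hf : LipschitzWith L fun x : ℝ => f x) : LipschitzWith L f := by
  refine LipschitzWith.of_dist_le_mul fun x y => ?_
  obtain ⟨t, rfl⟩ := QuotientAddGroup.mk_surjective x
  obtain ⟨s, rfl, hs⟩ := exists_coe_eq_abs_sub_eq_dist t y
  exact (hf.dist_le_mul t s).trans_eq (congrArg _ hs)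

theorem exists_lipschitzWith_of_periodic {φ : ℝ → ℝ} {c : ℝ} (hφ : ContDiff ℝ 1 φ) (hc : c ≠ 0)
    (hper : Function.Periodic φ c) : ∃ L, LipschitzWith L φ := by
  have hderiv : Function.Periodic (deriv φ) c := fun x => by
    rw [← deriv_comp_add_const, funext hper]
  obtain ⟨L, hL⟩ := (hderiv.isBounded_of_continuous hc
    (hφ.continuous_deriv le_rfl)).exists_norm_le
  refine ⟨L.toNNReal, lipschitzWith_of_nnnorm_deriv_le (hφ.differentiable one_ne_zero) fun x => ?_⟩
  exact NNReal.le_toNNReal_of_coe_le (hL _ (mem_range_self x))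

theorem CrFun.exists_lipschitzWith (f : CrFun 1) : ∃ L, LipschitzWith L f.1 := by
  obtain ⟨L, hL⟩ := exists_lipschitzWith_of_periodic f.2 one_ne_zero fun x => by simp
  exact ⟨L, lipschitzWith_of_comp_coe hL⟩

section Lift

variable {F : ℝ → ℝ} {d : ℤ}

theorem lift_add_int (hd : ∀ x, F (x + 1) = F x + d) (x : ℝ) (m : ℤ) :
    F (x + m) = F x + m * d := by
  simpa using AddConstMapClass.map_add_int' (⟨F, hd⟩ : AddConstMap ℝ ℝ 1 (d : ℝ)) x m

theorem cmap_coe (hd : ∀ x, F (x + 1) = F x + d) (t : ℝ) : cmap F (t : Circle1) = F t := by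
  rw [cmap, rep_coe]
  conv_rhs => rw [← Int.fract_add_floor t, lift_add_int hd, ← Int.cast_mul, coe_add_intCast]

theorem cmap_iterate_coe (hd : ∀ x, F (x + 1) = F x + d) (n : ℕ) (t : ℝ) :
    (cmap F)^[n] (t : Circle1) = F^[n] t :=
  (Function.Semiconj.iterate_right (fun x => (cmap_coe hd x).symm) n t).symm

theorem continuous_cmap_of_continuous (hd : ∀ x, F (x + 1) = F x + d) (hF : Continuous F) :
    Continuous (cmap F) := by
  have hcomp : cmap F ∘ ((↑) : ℝ → Circle1) = fun t => (F t : Circle1) := funext (cmap_coe hd)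
  have hquot := QuotientAddGroup.isQuotientMap_mk (N := AddSubgroup.zmultiples (1 : ℝ))
  exact hquot.continuous_iff.2 (hcomp ▸ (AddCircle.continuous_mk' (1 : ℝ)).comp hF)

theorem mul_abs_sub_le_of_le_abs_deriv {G : ℝ → ℝ} (hG : Differentiable ℝ G) {a : ℝ}
    (ha : ∀ x, a ≤ |deriv G x|) (u v : ℝ) : a * |u - v| ≤ |G u - G v| := by
  wlog huv : u < v generalizing u v
  · obtain rfl | hvu := eq_or_lt_of_le (not_lt.1 huv)
    · simp
    · rw [abs_sub_comm u, abs_sub_comm (G u)]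
      exact this v u hvu
  obtain ⟨w, -, hw⟩ := exists_deriv_eq_slope G huv hG.continuous.continuousOn hG.differentiableOn
  have hpos : 0 < |v - u| := abs_pos.2 (sub_pos.2 huv).ne'
  have hslope := ha w
  rwa [hw, abs_div, le_div_iff₀ hpos, abs_sub_comm v, abs_sub_comm (G v)] at hslope

theorem surjective_of_degree_ne_zero (hd : ∀ x, F (x + 1) = F x + d) (hF : Continuous F)
    (hd0 : d ≠ 0) : Function.Surjective F := by
  have hd2 : (1 : ℝ) ≤ d * d := by exact_mod_cast Int.add_one_le_iff.2 (mul_self_pos.2 hd0)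
  intro y
  obtain ⟨N, hN⟩ := exists_nat_ge |y - F 0|
  have hN' : (N : ℝ) ≤ N * (d * d) := le_mul_of_one_le_right N.cast_nonneg hd2
  obtain ⟨hlow, hup⟩ := abs_le.1 hN
  -- The values of `F` at `± N d` are `F 0 ± N d²`, which enclose `y`.
  have hneg : F (0 + (-(N * d) : ℤ)) ≤ y := by
    rw [lift_add_int hd]
    push_cast
    linarith
  have hpos : y ≤ F (0 + (N * d : ℤ)) := by
    rw [lift_add_int hd]
    push_cast
    linarith
  exact mem_range_of_exists_le_of_exists_ge hF ⟨_, hneg⟩ ⟨_, hpos⟩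

theorem hasContractingBranches_cmap (hd : ∀ x, F (x + 1) = F x + d)
    (hF : Function.Surjective F) {C l : ℝ} (hC : 0 < C) (hl : 1 < l)
    (hexp : ∀ n : ℕ, 1 ≤ n → ∀ u v, C * l ^ n * |u - v| ≤ |F^[n] u - F^[n] v|) :
    HasContractingBranches (cmap F) := by
  have : 0 < l := one_pos.trans hl
  refine ⟨⟨C⁻¹, by positivity⟩, ⟨l⁻¹, by positivity⟩, inv_lt_one_of_one_lt₀ hl, fun n y x => ?_⟩
  obtain ⟨t, rfl⟩ := QuotientAddGroup.mk_surjective y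
  obtain ⟨s, rfl, hs⟩ := exists_coe_eq_abs_sub_eq_dist (F^[n] t) x
  obtain ⟨t', rfl⟩ := hF.iterate n s
  refine ⟨t', cmap_iterate_coe hd n t', fun k hk => ?_⟩
  have hexp' := hexp (n - k) (Nat.sub_pos_of_lt hk) (F^[k] t) (F^[k] t')
  simp only [← Function.iterate_add_apply, Nat.sub_add_cancel hk.le] at hexp'
  change dist ((cmap F)^[k] (t : Circle1)) ((cmap F)^[k] (t' : Circle1)) ≤
    C⁻¹ * l⁻¹ ^ (n - k) * dist ((cmap F)^[n] (t : Circle1)) (F^[n] t' : Circle1)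
  simp only [cmap_iterate_coe hd]
  calc dist (F^[k] t : Circle1) (F^[k] t') ≤ |F^[k] t - F^[k] t'| := dist_coe_le_abs_sub _ _
    _ ≤ (C * l ^ (n - k))⁻¹ * |F^[n] t - F^[n] t'| := by
      rwa [le_inv_mul_iff₀ (by positivity)]
    _ = C⁻¹ * l⁻¹ ^ (n - k) * dist (F^[n] t : Circle1) (F^[n] t') := by
      rw [hs, mul_inv, inv_pow]

theorem ExpandingLift.continuous_cmap {r : ℕ∞} (hF : ExpandingLift r F) : Continuous (cmap F) :=
  let ⟨hr, ⟨_, hd⟩, _⟩ := hF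
  continuous_cmap_of_continuous hd hr.continuous

theorem ExpandingLift.hasContractingBranches {r : ℕ∞} (hr : r ≠ 0) (hF : ExpandingLift r F) :
    HasContractingBranches (cmap F) := by
  obtain ⟨hFr, ⟨d, hd⟩, C, hC, l, hl, hderiv⟩ := hF
  have hdiff : Differentiable ℝ F := hFr.differentiable (by exact_mod_cast hr)
  have hexp (n : ℕ) (hn : 1 ≤ n) (u v : ℝ) : C * l ^ n * |u - v| ≤ |F^[n] u - F^[n] v| :=
    mul_abs_sub_le_of_le_abs_deriv (hdiff.iterate n) (hderiv n hn) u v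
  have hd0 : d ≠ 0 := by
    rintro rfl
    have hle := hexp 1 le_rfl (0 + 1) 0
    simp only [Function.iterate_one, hd 0] at hle
    norm_num at hle
    nlinarith
  exact hasContractingBranches_cmap hd (surjective_of_degree_ne_zero hd hdiff.continuous hd0)
    hC hl hexp

end Lift

/-- Proposition 2.1(iv): the invariant probability measures of `T|K(f,T)` are exactly the
maximizing measures of `(f,T)`. -/
theorem measures_on_K_eq_maximizing (f : CrFun 1) (F : ExpMap 1) :
    {μ : Measure Circle1 | InvProb (cmap F.1) μ ∧ μ (Kset f.1 (cmap F.1)) = 1} =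
      {μ : Measure Circle1 | IsMaximizing f.1 (cmap F.1) μ} := by
  obtain ⟨L, hL⟩ := f.exists_lipschitzWith
  exact measures_on_K_eq_maximizing_general hL F.2.continuous_cmap
    (F.2.hasContractingBranches one_ne_zero)
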